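/- Let θ > 0, N ≥ 1 an integer, and let α, β be real numbers with 0 ≤ α < 1 and α < β ≤ α + 1. Then the expectation of X_N^I under the Ewens measure of parameter θ on S_N satisfies ∑_{σ ∈ S_N} P_θ^{(N)}(σ) X_N^I(σ) = N(β − α) − θ ∑_{j=1}^N (Ψ_N(j)/j)({jβ} − {jα}). -/

import Mathlib

open Finset

/-- `Ψ_N(j) = ∏_{i=0}^{j−1} (N−i)/(θ+N−1−i)`. -/
noncomputable def Psi (θ : ℝ) (n j : ℕ) : ℝ :=
  ∏ i ∈ Finset.range j, ((n : ℝ) - i) / (θ + (n : ℝ) - 1 - i)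

/-- The number of `j`-cycles of a permutation of `{1,…,N}`, where fixed points
are counted as `1`-cycles. -/
def cycleCount (N : ℕ) (σ : Equiv.Perm (Fin N)) (j : ℕ) : ℕ :=
  if j = 1 then N - σ.support.card else σ.cycleType.count j

/-- The total number of cycles of `σ`, fixed points counted as `1`-cycles. -/
def totalCycles (N : ℕ) (σ : Equiv.Perm (Fin N)) : ℕ :=
  Multiset.card σ.cycleType + (N - σ.support.card)

/-- The Ewens probability of parameter `θ` of the permutation `σ`:
`θ^{K(σ)} / (θ(θ+1)⋯(θ+N−1))`. -/
noncomputable def ewens (θ : ℝ) (N : ℕ) (σ : Equiv.Perm (Fin N)) : ℝ :=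
  θ ^ totalCycles N σ / ∏ i ∈ Finset.range N, (θ + (i : ℝ))

/-- The number of eigenvalues of the permutation matrix of `σ` in the arc
`(e^{2iπα}, e^{2iπβ}]`: `X_N^I(σ) = ∑_{j=1}^N a_{N,j}(σ)(⌊jβ⌋ − ⌊jα⌋)`. -/
noncomputable def XNI (N : ℕ) (α β : ℝ) (σ : Equiv.Perm (Fin N)) : ℝ :=
  ∑ j ∈ Finset.Icc 1 N,
    (cycleCount N σ j : ℝ) * ((⌊(j : ℝ) * β⌋ : ℝ) - (⌊(j : ℝ) * α⌋ : ℝ))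

/-!
Since `∑ j, j * a_j(σ) = N`, writing `⌊t⌋ = t - {t}` gives
`X_N^I(σ) = N (β - α) - ∑ j, a_j(σ) ({jβ} - {jα})`, so everything reduces to
`E[a_j] = θ Ψ_N(j) / j`. The `j`-cycles contain `j * a_j(σ)` points, and the Ewens measure is
invariant under conjugation, so `E[j * a_j]` is `N` times the probability that the cycle of a
given point has length `j`. Deleting that point from its cycle of length `j + 1 ≥ 2` leaves a
permutation of `N - 1` points with the same number of cycles and a marked point (the old image)
on a cycle of length `j`; iterating until the given point is fixed yields
`∑ σ, j * a_j(σ) * θ ^ K(σ) = θ * N (N - 1) ⋯ (N - j + 1) * ∏ i < N - j, (θ + i)`.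
-/

section CycleCounts

open Equiv Function

variable {α : Type*}

theorem minimalPeriod_perm_pos [Finite α] (σ : Perm α) (x : α) : 0 < minimalPeriod σ x :=
  minimalPeriod_pos_of_mem_periodicPts (σ.injective.mem_periodicPts x)

theorem minimalPeriod_conj (σ g : Perm α) (x : α) :
    minimalPeriod (g * σ * g⁻¹) (g x) = minimalPeriod σ x := by
  refine minimalPeriod_eq_minimalPeriod_iff.mpr fun k => ?_
  rw [IsPeriodicPt, IsFixedPt, Perm.iterate_eq_pow, conj_pow]
  simp [IsPeriodicPt, IsFixedPt, Perm.iterate_eq_pow]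

variable [DecidableEq α]

-- If `x` is a fixed point of `σ`, then `swap x y * σ` is `σ` with `x` inserted into the cycle of
-- `y` just before `y`.
theorem iterate_swap_mul_apply_of_lt_minimalPeriod {σ : Perm α} {x y : α} (hx : σ x = x)
    (hyx : y ≠ x) {k : ℕ} (hk : k < minimalPeriod σ y) :
    (swap x y * σ)^[k + 1] x = σ^[k] y := by
  induction k with
  | zero => simp [hx]
  | succ k ih =>
    have hne_x : σ^[k + 1] y ≠ x := fun h =>
      hyx <| (σ.injective.iterate (k + 1)) <| h.trans (iterate_fixed hx (k + 1)).symm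
    have hne_y : σ^[k + 1] y ≠ y := not_isPeriodicPt_of_pos_of_lt_minimalPeriod k.succ_ne_zero hk
    rw [iterate_succ_apply', ih (by omega), Perm.mul_apply, ← iterate_succ_apply' (f := σ),
      swap_apply_of_ne_of_ne hne_x hne_y]

theorem minimalPeriod_swap_mul [Finite α] {σ : Perm α} {x y : α} (hx : σ x = x) (hyx : y ≠ x) :
    minimalPeriod (swap x y * σ) x = minimalPeriod σ y + 1 := by
  have hiter {k : ℕ} (hk : k < minimalPeriod σ y) : (swap x y * σ)^[k + 1] x = σ^[k] y :=
    iterate_swap_mul_apply_of_lt_minimalPeriod hx hyx hk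
  refine le_antisymm (IsPeriodicPt.minimalPeriod_le (Nat.succ_pos _) ?_) ?_
  · obtain ⟨k, hk⟩ := Nat.exists_eq_succ_of_ne_zero (minimalPeriod_perm_pos σ y).ne'
    have hreturn : σ^[k + 1] y = y := by rw [← Nat.succ_eq_add_one, ← hk, iterate_minimalPeriod]
    rw [hk, IsPeriodicPt, IsFixedPt, iterate_succ_apply', hiter (by omega), Perm.mul_apply,
      ← iterate_succ_apply' (f := σ), hreturn, swap_apply_right]
  · by_contra! hlt
    obtain ⟨k, hk⟩ :=
      Nat.exists_eq_succ_of_ne_zero (minimalPeriod_perm_pos (swap x y * σ) x).ne'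
    have hreturn : σ^[k] y = x := by
      rw [← hiter (by omega), ← Nat.succ_eq_add_one, ← hk, iterate_minimalPeriod]
    exact hyx <| (σ.injective.iterate k) <| hreturn.trans (iterate_fixed hx k).symm

variable [Fintype α]

theorem card_support_cycleOf_eq_minimalPeriod {σ : Perm α} {x : α} (hx : σ x ≠ x) :
    #(σ.cycleOf x).support = minimalPeriod σ x := by
  have hcycle : (σ.cycleOf x).IsCycle := σ.isCycle_cycleOf hx
  have hmoved : σ.cycleOf x x ≠ x := by rwa [Perm.cycleOf_apply_self]
  refine Nat.dvd_right_iff_eq.mp fun k => ?_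
  rw [← hcycle.orderOf, orderOf_dvd_iff_pow_eq_one, hcycle.pow_eq_one_iff' hmoved,
    Perm.cycleOf_pow_apply_self, ← isPeriodicPt_iff_minimalPeriod_dvd, IsPeriodicPt, IsFixedPt,
    Perm.iterate_eq_pow]

theorem card_minimalPeriod_eq_one (σ : Perm α) :
    #{x | minimalPeriod σ x = 1} = Fintype.card α - #σ.support := by
  rw [← card_compl]
  congr 1
  ext x
  simp [minimalPeriod_eq_one_iff_isFixedPt, IsFixedPt]

theorem card_minimalPeriod_eq_of_ne_one (σ : Perm α) {j : ℕ} (hj : j ≠ 1) :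
    #{x | minimalPeriod σ x = j} = j * σ.cycleType.count j := by
  have hmoved {x : α} (hx : minimalPeriod σ x = j) : σ x ≠ x := fun h =>
    hj (hx ▸ minimalPeriod_eq_one_iff_isFixedPt.mpr h)
  have hfiber (c : Perm α) (hc : c ∈ σ.cycleFactorsFinset.filter (#·.support = j)) :
      #{x ∈ ({x | minimalPeriod σ x = j} : Finset α) | σ.cycleOf x = c} = j := by
    obtain ⟨hc, hcard⟩ := mem_filter.mp hc
    refine Eq.trans (congrArg card ?_) hcard
    ext x
    simp only [mem_filter, mem_univ, true_and]
    constructor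
    · rintro ⟨hx, rfl⟩
      simpa using hmoved hx
    · intro hx
      have hcx : c = σ.cycleOf x := Perm.cycle_is_cycleOf hx hc
      have hσx : σ x ≠ x :=
        Perm.mem_support.mp (Perm.mem_cycleFactorsFinset_support_le hc hx)
      exact ⟨by rw [← card_support_cycleOf_eq_minimalPeriod hσx, ← hcx, hcard], hcx.symm⟩
  have hmaps (x : α) (hx : x ∈ ({x | minimalPeriod σ x = j} : Finset α)) :
      σ.cycleOf x ∈ σ.cycleFactorsFinset.filter (#·.support = j) := by
    have hx := (mem_filter_univ x).mp hx
    exact mem_filter.mpr ⟨Perm.cycleOf_mem_cycleFactorsFinset_iff.mpr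
      (Perm.mem_support.mpr (hmoved hx)), hx ▸ card_support_cycleOf_eq_minimalPeriod (hmoved hx)⟩
  rw [card_eq_sum_card_fiberwise hmaps, sum_congr rfl hfiber, sum_const, smul_eq_mul, mul_comm,
    Perm.cycleType_def, Multiset.count_map, card_def, filter_val]
  simp only [comp_apply, eq_comm]

theorem card_parts_partition_mul_of_disjoint {σ τ : Perm α} (h : σ.Disjoint τ) :
    (σ * τ).partition.parts.card + Fintype.card α =
      σ.partition.parts.card + τ.partition.parts.card := by
  have hle : #(σ * τ).support ≤ Fintype.card α := card_le_univ _
  rw [h.card_support_mul] at hle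
  simp only [Perm.parts_partition, h.cycleType_mul, h.card_support_mul, Multiset.card_add,
    Multiset.card_replicate]
  omega

theorem card_parts_partition_swap_mul_of_isCycle {c : Perm α} (hc : c.IsCycle) {x : α}
    (hx : c x ≠ x) :
    (swap x (c x) * c).partition.parts.card = c.partition.parts.card + 1 := by
  have hle : #c.support ≤ Fintype.card α := card_le_univ _
  by_cases hccx : c (c x) = x
  · have hswap : c = swap x (c x) := hc.eq_swap_of_apply_apply_eq_self hx hccx
    have hone : swap x (c x) * c = 1 := by
      nth_rewrite 2 [hswap]
      exact swap_mul_self x (c x)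
    have htwo : #c.support = 2 := by rw [hswap, Perm.card_support_swap hx.symm]
    simp only [Perm.parts_partition, hone, hc.cycleType, htwo, Perm.cycleType_one,
      Perm.support_one, card_empty, Multiset.card_add, Multiset.card_replicate,
      Multiset.card_singleton, Multiset.card_zero]
    omega
  · have hcard : #(swap x (c x) * c).support + 1 = #c.support := by
      rw [Perm.support_swap_mul_eq c x hccx, sdiff_singleton_eq_erase,
        card_erase_add_one (Perm.mem_support.mpr hx)]
    simp only [Perm.parts_partition, hc.cycleType, (hc.swap_mul hx hccx).cycleType,
      Multiset.card_add, Multiset.card_replicate, Multiset.card_singleton]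
    omega

theorem card_parts_partition_swap_mul {σ : Perm α} {x : α} (hx : σ x ≠ x) :
    (swap x (σ x) * σ).partition.parts.card = σ.partition.parts.card + 1 := by
  have hmem : σ.cycleOf x ∈ σ.cycleFactorsFinset :=
    Perm.cycleOf_mem_cycleFactorsFinset_iff.mpr (Perm.mem_support.mpr hx)
  obtain ⟨c, r, hc, hcx, hdisj, rfl⟩ : ∃ c r : Perm α,
      c.IsCycle ∧ c x = σ x ∧ c.Disjoint r ∧ σ = c * r := by
    have hdisj := (Perm.disjoint_mul_inv_of_mem_cycleFactorsFinset hmem).symm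
    exact ⟨σ.cycleOf x, σ * (σ.cycleOf x)⁻¹, σ.isCycle_cycleOf hx, σ.cycleOf_apply_self x, hdisj,
      by rw [hdisj.commute.eq, inv_mul_cancel_right]⟩
  rw [← hcx] at hx ⊢
  have hrx : r x = x := (hdisj x).resolve_left hx
  have hrcx : r (c x) = c x := (hdisj (c x)).resolve_left (c.injective.ne hx)
  have hswap : (swap x (c x)).Disjoint r := fun z => by
    by_cases hz : z = x ∨ z = c x
    · rcases hz with rfl | rfl <;> simp [hrx, hrcx]
    · exact .inl (swap_apply_of_ne_of_ne (not_or.mp hz).1 (not_or.mp hz).2)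
  have hcr := card_parts_partition_mul_of_disjoint hdisj
  have hscr := card_parts_partition_mul_of_disjoint (hswap.mul_left hdisj)
  have hsc := card_parts_partition_swap_mul_of_isCycle hc hx
  rw [mul_assoc] at hscr
  omega

theorem sum_filter_minimalPeriod_eq {M : Type*} [AddCommMonoid M] {w : Perm α → M}
    (hw : ∀ g σ, w (g * σ * g⁻¹) = w σ) (j : ℕ) (x y : α) :
    ∑ σ ∈ {σ : Perm α | minimalPeriod σ x = j}, w σ =
      ∑ σ ∈ {σ : Perm α | minimalPeriod σ y = j}, w σ := by
  refine sum_equiv (MulAut.conj (swap x y)).toEquiv (fun σ => ?_) fun σ _ => (hw _ σ).symm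
  have hperiod := minimalPeriod_conj σ (swap x y) x
  rw [swap_apply_left] at hperiod
  simp [← hperiod]

theorem sum_card_minimalPeriod_eq_mul {R : Type*} [CommSemiring R] {w : Perm α → R}
    (hw : ∀ g σ, w (g * σ * g⁻¹) = w σ) (j : ℕ) (x : α) :
    ∑ σ : Perm α, (#{y | minimalPeriod σ y = j} : R) * w σ =
      Fintype.card α * ∑ σ ∈ {σ : Perm α | minimalPeriod σ x = j}, w σ := by
  calc ∑ σ : Perm α, (#{y | minimalPeriod σ y = j} : R) * w σ
      = ∑ σ : Perm α, ∑ y, if minimalPeriod σ y = j then w σ else 0 := by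
        simp only [← sum_filter, sum_const, nsmul_eq_mul]
    _ = ∑ y, ∑ σ ∈ {σ : Perm α | minimalPeriod σ y = j}, w σ := by
        rw [sum_comm]
        simp only [sum_filter]
    _ = Fintype.card α * ∑ σ ∈ {σ : Perm α | minimalPeriod σ x = j}, w σ := by
        rw [sum_congr rfl fun y _ => sum_filter_minimalPeriod_eq hw j y x]
        simp

end CycleCounts

section Insertion

open Equiv Function

variable {n : ℕ}

theorem decomposeFin_symm_eq_swap_mul (p : Fin (n + 1)) (e : Perm (Fin n)) :
    Perm.decomposeFin.symm (p, e) = swap 0 p * Perm.decomposeFin.symm (0, e) := by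
  ext x
  cases x using Fin.cases <;> simp

theorem decomposeFin_symm_zero_eq_extendDomain (e : Perm (Fin n)) :
    Perm.decomposeFin.symm (0, e) = e.extendDomain (finSuccAboveEquiv (0 : Fin (n + 1))) := by
  ext x
  cases x using Fin.cases with
  | zero => rw [Perm.extendDomain_apply_not_subtype _ _ (by simp)]; simp
  | succ i =>
    have hsucc := e.extendDomain_apply_image (finSuccAboveEquiv (0 : Fin (n + 1))) i
    simp only [finSuccAboveEquiv_apply, Fin.succAbove_zero] at hsucc
    simp [hsucc]

theorem card_parts_partition_decomposeFin_symm_zero (e : Perm (Fin n)) :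
    (Perm.decomposeFin.symm (0, e)).partition.parts.card = e.partition.parts.card + 1 := by
  have hle : #e.support ≤ n := card_finset_fin_le _
  simp only [Perm.parts_partition, decomposeFin_symm_zero_eq_extendDomain,
    Perm.cycleType_extendDomain, Perm.card_support_extend_domain, Fintype.card_fin,
    Multiset.card_add, Multiset.card_replicate]
  omega

theorem card_parts_partition_decomposeFin_symm_succ (p : Fin n) (e : Perm (Fin n)) :
    (Perm.decomposeFin.symm (p.succ, e)).partition.parts.card = e.partition.parts.card := by
  have hcut := card_parts_partition_swap_mul (σ := Perm.decomposeFin.symm (p.succ, e)) (x := 0)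
    (by simp)
  rw [Perm.decomposeFin_symm_apply_zero, decomposeFin_symm_eq_swap_mul, swap_mul_self_mul,
    card_parts_partition_decomposeFin_symm_zero] at hcut
  rw [decomposeFin_symm_eq_swap_mul]
  omega

theorem minimalPeriod_decomposeFin_symm_zero (e : Perm (Fin n)) :
    minimalPeriod (Perm.decomposeFin.symm (0, e)) 0 = 1 :=
  minimalPeriod_eq_one_iff_isFixedPt.mpr (by simp [IsFixedPt])

theorem minimalPeriod_decomposeFin_symm_succ (p : Fin n) (e : Perm (Fin n)) :
    minimalPeriod (Perm.decomposeFin.symm (p.succ, e)) 0 = minimalPeriod e p + 1 := by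
  have hsemiconj : Semiconj Fin.succ e (Perm.decomposeFin.symm (0, e)) := fun i => by simp
  rw [decomposeFin_symm_eq_swap_mul, minimalPeriod_swap_mul (by simp) p.succ_ne_zero]
  congr 1
  refine minimalPeriod_eq_minimalPeriod_iff.mpr fun k => ?_
  rw [IsPeriodicPt, IsFixedPt, ← hsemiconj.iterate_right k p, Fin.succ_inj]
  rfl

theorem sum_perm_fin_succ {M : Type*} [AddCommMonoid M] (f : Perm (Fin (n + 1)) → M) :
    ∑ σ, f σ = ∑ e, f (Perm.decomposeFin.symm (0, e)) +
      ∑ p : Fin n, ∑ e, f (Perm.decomposeFin.symm (p.succ, e)) := by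
  rw [← Equiv.sum_comp Perm.decomposeFin.symm, Fintype.sum_prod_type, Fin.sum_univ_succ]

variable {R : Type*} [CommSemiring R] (θ : R)

theorem sum_pow_card_parts_partition (n : ℕ) :
    ∑ σ : Perm (Fin n), θ ^ σ.partition.parts.card = ∏ i ∈ range n, (θ + i) := by
  induction n with
  | zero => simp [Perm.parts_partition]
  | succ n ih =>
    rw [sum_perm_fin_succ, prod_range_succ, ← ih]
    simp only [card_parts_partition_decomposeFin_symm_zero,
      card_parts_partition_decomposeFin_symm_succ, pow_succ, ← sum_mul, sum_const, card_univ,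
      Fintype.card_fin, nsmul_eq_mul]
    ring

theorem sum_pow_card_parts_of_minimalPeriod_eq_one (n : ℕ) :
    ∑ σ ∈ {σ : Perm (Fin (n + 1)) | minimalPeriod σ 0 = 1}, θ ^ σ.partition.parts.card =
      θ * ∏ i ∈ range n, (θ + i) := by
  rw [sum_filter, sum_perm_fin_succ, ← sum_pow_card_parts_partition, mul_sum]
  simp [minimalPeriod_decomposeFin_symm_zero, minimalPeriod_decomposeFin_symm_succ,
    card_parts_partition_decomposeFin_symm_zero, (minimalPeriod_perm_pos _ _).ne', pow_succ']

theorem sum_pow_card_parts_of_minimalPeriod_eq_add_two (n j : ℕ) :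
    ∑ σ ∈ {σ : Perm (Fin (n + 1)) | minimalPeriod σ 0 = j + 2}, θ ^ σ.partition.parts.card =
      ∑ e : Perm (Fin n), (#{p | minimalPeriod e p = j + 1} : R) * θ ^ e.partition.parts.card := by
  rw [sum_filter, sum_perm_fin_succ, sum_comm (s := (univ : Finset (Fin n)))]
  simp [minimalPeriod_decomposeFin_symm_zero, minimalPeriod_decomposeFin_symm_succ,
    card_parts_partition_decomposeFin_symm_succ, ← sum_filter]

theorem sum_card_minimalPeriod_mul_pow_card_parts (n j : ℕ) :
    ∑ σ : Perm (Fin n), (#{x | minimalPeriod σ x = j + 1} : R) * θ ^ σ.partition.parts.card =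
      θ * n.descFactorial (j + 1) * ∏ i ∈ range (n - (j + 1)), (θ + i) := by
  induction n generalizing j with
  | zero => simp
  | succ n ih =>
    have hclass (g σ : Perm (Fin (n + 1))) :
        θ ^ (g * σ * g⁻¹).partition.parts.card = θ ^ σ.partition.parts.card := by
      rw [Perm.partition_eq_of_isConj.mp (isConj_iff.mpr ⟨g, rfl⟩ : IsConj σ (g * σ * g⁻¹))]
    rw [sum_card_minimalPeriod_eq_mul hclass _ 0, Nat.succ_descFactorial_succ,
      Nat.add_sub_add_right]
    cases j with
    | zero =>
      rw [sum_pow_card_parts_of_minimalPeriod_eq_one, Fintype.card_fin,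
        Nat.descFactorial_zero, Nat.sub_zero]
      push_cast
      ring
    | succ j =>
      rw [sum_pow_card_parts_of_minimalPeriod_eq_add_two, ih, Fintype.card_fin]
      push_cast
      ring

end Insertion

section Ewens

theorem totalCycles_eq_card_parts (N : ℕ) (σ : Equiv.Perm (Fin N)) :
    totalCycles N σ = σ.partition.parts.card := by
  simp [totalCycles, Equiv.Perm.parts_partition]

theorem mul_cycleCount (N : ℕ) (σ : Equiv.Perm (Fin N)) (j : ℕ) :
    j * cycleCount N σ j = #{x | Function.minimalPeriod σ x = j} := by
  unfold cycleCount
  split_ifs with hj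
  · rw [hj, card_minimalPeriod_eq_one, Fintype.card_fin, one_mul]
  · rw [card_minimalPeriod_eq_of_ne_one σ hj]

theorem sum_mul_cycleCount (N : ℕ) (σ : Equiv.Perm (Fin N)) :
    ∑ j ∈ Icc 1 N, j * cycleCount N σ j = N := by
  have hmaps (x : Fin N) (_ : x ∈ univ) : Function.minimalPeriod σ x ∈ Icc 1 N := by
    have hle : Function.minimalPeriod σ x ≤ Fintype.card (Fin N) := Function.minimalPeriod_le_card
    exact mem_Icc.mpr ⟨minimalPeriod_perm_pos σ x, hle.trans_eq (Fintype.card_fin N)⟩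
  simp only [mul_cycleCount, ← card_eq_sum_card_fiberwise hmaps, card_univ, Fintype.card_fin]

theorem Psi_succ_succ (θ : ℝ) (n j : ℕ) :
    Psi θ (n + 1) (j + 1) = Psi θ n j * ((n + 1) / (θ + n)) := by
  unfold Psi
  rw [prod_range_succ']
  congr 1
  · refine prod_congr rfl fun i _ => ?_
    push_cast
    congr 1 <;> ring
  · push_cast
    congr 1 <;> ring

theorem Psi_mul_prod {θ : ℝ} {n : ℕ} (hθ : ∀ i < n, θ + i ≠ 0) (j : ℕ) :
    Psi θ n j * ∏ i ∈ range n, (θ + i) =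
      n.descFactorial j * ∏ i ∈ range (n - j), (θ + i) := by
  induction n generalizing j with
  | zero => cases j <;> simp [Psi, prod_range_succ']
  | succ n ih =>
    cases j with
    | zero => simp [Psi]
    | succ j =>
      have hn : θ + n ≠ 0 := hθ n n.lt_succ_self
      calc Psi θ (n + 1) (j + 1) * ∏ i ∈ range (n + 1), (θ + i)
          = (n + 1) * (Psi θ n j * ∏ i ∈ range n, (θ + i)) := by
            rw [Psi_succ_succ, prod_range_succ]
            field_simp
        _ = (n + 1).descFactorial (j + 1) * ∏ i ∈ range (n + 1 - (j + 1)), (θ + i) := by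
            rw [ih (fun i hi => hθ i (hi.trans n.lt_succ_self)), Nat.succ_descFactorial_succ,
              Nat.add_sub_add_right]
            push_cast
            ring

variable {θ : ℝ} {N : ℕ}

theorem sum_ewens (hθ : ∀ i < N, θ + i ≠ 0) : ∑ σ, ewens θ N σ = 1 := by
  have hprod : ∏ i ∈ range N, (θ + (i : ℝ)) ≠ 0 :=
    prod_ne_zero_iff.mpr fun i hi => hθ i (mem_range.mp hi)
  simp only [ewens, totalCycles_eq_card_parts, ← sum_div, sum_pow_card_parts_partition]
  exact div_self hprod

theorem sum_ewens_mul_cycleCount (hθ : ∀ i < N, θ + i ≠ 0) {j : ℕ} (hj : j ≠ 0) :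
    ∑ σ, ewens θ N σ * cycleCount N σ j = θ * (Psi θ N j / j) := by
  have hj' : (j : ℝ) ≠ 0 := Nat.cast_ne_zero.mpr hj
  have hprod : ∏ i ∈ range N, (θ + (i : ℝ)) ≠ 0 :=
    prod_ne_zero_iff.mpr fun i hi => hθ i (mem_range.mp hi)
  have hcard (σ : Equiv.Perm (Fin N)) :
      (cycleCount N σ j : ℝ) = (#{x | Function.minimalPeriod σ x = j} : ℝ) / j := by
    rw [← mul_cycleCount, Nat.cast_mul, mul_div_cancel_left₀ _ hj']
  have hweight : ∑ σ : Equiv.Perm (Fin N),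
      (#{x | Function.minimalPeriod σ x = j} : ℝ) * θ ^ σ.partition.parts.card =
        θ * Psi θ N j * ∏ i ∈ range N, (θ + (i : ℝ)) := by
    obtain ⟨k, rfl⟩ := Nat.exists_eq_succ_of_ne_zero hj
    rw [sum_card_minimalPeriod_mul_pow_card_parts, mul_assoc θ, mul_assoc θ, Psi_mul_prod hθ]
  calc ∑ σ, ewens θ N σ * cycleCount N σ j
      = (∑ σ : Equiv.Perm (Fin N), (#{x | Function.minimalPeriod σ x = j} : ℝ) *
          θ ^ σ.partition.parts.card) / (j * ∏ i ∈ range N, (θ + (i : ℝ))) := by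
        rw [sum_div]
        refine sum_congr rfl fun σ _ => ?_
        rw [ewens, totalCycles_eq_card_parts, hcard]
        field_simp
    _ = θ * (Psi θ N j / j) := by
        rw [hweight]
        field_simp

theorem sum_ewens_mul_sum_cycleCount_mul (hθ : ∀ i < N, θ + i ≠ 0) (f : ℕ → ℝ) :
    ∑ σ, ewens θ N σ * ∑ j ∈ Icc 1 N, cycleCount N σ j * f j =
      θ * ∑ j ∈ Icc 1 N, Psi θ N j / j * f j := by
  simp only [mul_sum, ← mul_assoc]
  rw [sum_comm]
  refine sum_congr rfl fun j hj => ?_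
  rw [← sum_mul, sum_ewens_mul_cycleCount hθ (Nat.one_le_iff_ne_zero.mp (mem_Icc.mp hj).1)]

theorem XNI_eq_sub_sum_fract (N : ℕ) (α β : ℝ) (σ : Equiv.Perm (Fin N)) :
    XNI N α β σ = N * (β - α) - ∑ j ∈ Icc 1 N,
      cycleCount N σ j * (Int.fract (j * β) - Int.fract (j * α)) := by
  have hN : (N : ℝ) = ∑ j ∈ Icc 1 N, (j : ℝ) * cycleCount N σ j := by
    exact_mod_cast (sum_mul_cycleCount N σ).symm
  rw [XNI, hN, sum_mul, ← sum_sub_distrib]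
  refine sum_congr rfl fun j _ => ?_
  simp only [Int.fract]
  ring

end Ewens

theorem stmt_7_general {θ : ℝ} {N : ℕ} (hθ : ∀ i < N, θ + i ≠ 0) (α β : ℝ) :
    ∑ σ : Equiv.Perm (Fin N), ewens θ N σ * XNI N α β σ
      = (N : ℝ) * (β - α)
        - θ * ∑ j ∈ Finset.Icc 1 N,
            Psi θ N j / (j : ℝ) * (Int.fract ((j : ℝ) * β) - Int.fract ((j : ℝ) * α)) := by
  simp only [XNI_eq_sub_sum_fract, mul_sub (ewens θ N _), sum_sub_distrib, ← sum_mul]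
  rw [sum_ewens hθ, one_mul,
    sum_ewens_mul_sum_cycleCount_mul hθ fun j => Int.fract (j * β) - Int.fract (j * α)]

/-- The expectation of `X_N^I` under the Ewens measure of parameter `θ` equals
`N(β − α) − θ ∑_{j=1}^N (Ψ_N(j)/j)({jβ} − {jα})`. -/
theorem stmt_7 (θ : ℝ) (hθ : 0 < θ) (N : ℕ) (hN : 1 ≤ N) (α β : ℝ)
    (hα0 : 0 ≤ α) (hα1 : α < 1) (hαβ : α < β) (hβ : β ≤ α + 1) :
    ∑ σ : Equiv.Perm (Fin N), ewens θ N σ * XNI N α β σ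
      = (N : ℝ) * (β - α)
        - θ * ∑ j ∈ Finset.Icc 1 N,
            Psi θ N j / (j : ℝ) * (Int.fract ((j : ℝ) * β) - Int.fract ((j : ℝ) * α)) :=
  stmt_7_general (fun i _ => by positivity) α β
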